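/- arXiv:0907.0873 — 2 statements merged into one kernel-verified Lean document; each statement's English description precedes it below -/
import Mathlib

section
/- Let (ρ,u) be a classical solution on [0,T) of the 2-dimensional Euler–Poisson equations without damping (β = 0, N = 2). Suppose there exists a constant ε > 0 such that 2∫_Ω (ρ|u|² + 2P) dx < gM² − ε for all t ∈ [0,T), where M = ∫_Ω ρ(t,x) dx is the (time-independent) total mass. Then T must be finite; i.e., no such solution can exist globally in time. -/
open MeasureTheory Real Filter
open scoped RealInnerProductSpace Topology

noncomputable section

/-- Euclidean space `ℝ^N`. -/
abbrev Euc (N : ℕ) := EuclideanSpace ℝ (Fin N)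

/-- Divergence of a vector field on `ℝ^N`. -/
def ediv {N : ℕ} (v : Euc N → Euc N) (x : Euc N) : ℝ :=
  ∑ i, fderiv ℝ (fun y => v y i) x (EuclideanSpace.single i 1)

/-- Partial derivative of a scalar field in the `i`-th coordinate direction. -/
def epartial {N : ℕ} (i : Fin N) (f : Euc N → ℝ) (x : Euc N) : ℝ :=
  fderiv ℝ f x (EuclideanSpace.single i 1)

/-- Green's function of the Poisson equation in `ℝ^N`:
`log |x|` for `N = 2` and `-|x|^(2-N)` for `N ≥ 3`. -/
def green (N : ℕ) (x : Euc N) : ℝ :=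
  if N = 2 then Real.log ‖x‖ else -(‖x‖ ^ ((2 : ℝ) - (N : ℝ)))

/-- Gravitational potential `Φ(t,x) = g ∫ G(x-y) ρ(t,y) dy`. -/
def potential (N : ℕ) (g : ℝ) (ρ : ℝ → Euc N → ℝ) (t : ℝ) (x : Euc N) : ℝ :=
  g * ∫ y, green N (x - y) * ρ t y

/-- A classical solution on `[0,T)` (with `T : EReal`, so `T = ⊤` means a global
solution) of the `N`-dimensional Euler–Poisson equations with pressure
`P = K ρ^γ`, damping constant `β` and gravitational constant `g`:
nonnegative `C¹` density `ρ`, `C¹` velocity `u`, with `ρ(t,·)` supported in a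
fixed bounded open set `Ω`, satisfying the continuity and momentum equations
pointwise. -/
structure IsEPSolution (N : ℕ) (K γ β g : ℝ) (Ω : Set (Euc N)) (T : EReal)
    (ρ : ℝ → Euc N → ℝ) (u : ℝ → Euc N → Euc N) : Prop where
  rho_nonneg : ∀ t x, 0 ≤ ρ t x
  rho_C1 : ContDiff ℝ 1 (fun p : ℝ × Euc N => ρ p.1 p.2)
  u_C1 : ContDiff ℝ 1 (fun p : ℝ × Euc N => u p.1 p.2)
  omega_open : IsOpen Ω
  omega_bounded : Bornology.IsBounded Ω
  support_subset : ∀ t : ℝ, 0 ≤ t → (t : EReal) < T → Function.support (ρ t) ⊆ Ω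
  continuity_eq : ∀ t : ℝ, 0 ≤ t → (t : EReal) < T → ∀ x : Euc N,
    deriv (fun s => ρ s x) t + ediv (fun y => ρ t y • u t y) x = 0
  momentum_eq : ∀ t : ℝ, 0 ≤ t → (t : EReal) < T → ∀ x : Euc N, ∀ j : Fin N,
    deriv (fun s => ρ s x * u s x j) t
      + (∑ i, epartial i (fun y => ρ t y * u t y i * u t y j) x)
      + epartial j (fun y => K * ρ t y ^ γ) x
      = -(ρ t x * epartial j (potential N g ρ t) x) - β * ρ t x * u t x j

/-- Total energy (case `γ > 1`):
`E(t) = ∫_Ω (½ ρ|u|² + P/(γ-1) + ½ ρΦ) dx` with `P = K ρ^γ`. -/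
def energy (N : ℕ) (K γ g : ℝ) (Ω : Set (Euc N)) (ρ : ℝ → Euc N → ℝ)
    (u : ℝ → Euc N → Euc N) (t : ℝ) : ℝ :=
  ∫ x in Ω, ((1 / 2) * ρ t x * ‖u t x‖ ^ 2 + K * ρ t x ^ γ / (γ - 1)
    + (1 / 2) * ρ t x * potential N g ρ t x)

/-- Isothermal total energy (case `γ = 1`, `P = Kρ`):
`E(t) = ∫_Ω (½ ρ|u|² + Kρ log ρ + ½ ρΦ) dx` (note `ρ log ρ = 0` where `ρ = 0`
since `Real.log 0 = 0`). -/
def energyIso (N : ℕ) (K g : ℝ) (Ω : Set (Euc N)) (ρ : ℝ → Euc N → ℝ)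
    (u : ℝ → Euc N → Euc N) (t : ℝ) : ℝ :=
  ∫ x in Ω, ((1 / 2) * ρ t x * ‖u t x‖ ^ 2 + K * ρ t x * Real.log (ρ t x)
    + (1 / 2) * ρ t x * potential N g ρ t x)

/-- Second inertia function `H(t) = ∫_Ω ρ(t,x)|x|² dx`. -/
def inertia (N : ℕ) (Ω : Set (Euc N)) (ρ : ℝ → Euc N → ℝ) (t : ℝ) : ℝ :=
  ∫ x in Ω, ρ t x * ‖x‖ ^ 2

/-- Maximal radius of the support of `ρ(t,·)`. -/
def maxRadius (N : ℕ) (ρ : ℝ → Euc N → ℝ) (t : ℝ) : ℝ :=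
  sSup ((fun x : Euc N => ‖x‖) '' Function.support (ρ t))

/-!
The inertia `H` satisfies `H' = 2F`, where `F = ∫ ρ x · u`. Integrating the momentum equation
against `x` gives `F' + βF = ∫ (ρ|u|² + NP) - ∫ ρ x · ∇Φ`. In dimension two the kernel is
logarithmic, so dilating `x` by `c` changes it by the constant `log |c|` and the last integral
depends on the mass only: it is `gM² / 2`. The energy bound thus reads `(H' + βH)' ≤ -ε`, hence
`H' + βH → -∞`. As `H ≥ 0`, eventually `H' ≤ -1`, and `H` becomes negative in finite time.
-/

open scoped Convolution
open Function (uncurry)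

theorem tendsto_atBot_of_hasDerivAt_le_neg {f f' : ℝ → ℝ} {a c : ℝ} (hc : 0 < c)
    (hf : ∀ t, a ≤ t → HasDerivAt f (f' t) t) (hle : ∀ t, a ≤ t → f' t ≤ -c) :
    Tendsto f atTop atBot := by
  have hbound : ∀ t, a ≤ t → f t ≤ f a + -c * (t - a) := fun t ht => by
    have := (convex_Ici a).image_sub_le_mul_sub_of_deriv_le (f := f) (C := -c)
      (fun s hs => (hf s hs).continuousAt.continuousWithinAt)
      (fun s hs => (hf s (interior_subset hs)).differentiableAt.differentiableWithinAt)
      (fun s hs => (hf s (interior_subset hs)).deriv.trans_le (hle s (interior_subset hs)))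
      a Set.self_mem_Ici t ht ht
    linarith
  refine tendsto_atBot_mono' atTop ((eventually_ge_atTop a).mono hbound) ?_
  exact tendsto_atBot_add_const_left _ _
    ((tendsto_atTop_add_const_right _ _ tendsto_id).const_mul_atTop_of_neg (by linarith))

theorem exists_neg_of_deriv_deriv_add_mul_le_neg {H F F' : ℝ → ℝ} {β a c : ℝ} (hβ : 0 ≤ β)
    (hc : 0 < c) (hH : ∀ t, a ≤ t → HasDerivAt H (F t) t)
    (hF : ∀ t, a ≤ t → HasDerivAt F (F' t) t) (hle : ∀ t, a ≤ t → F' t + β * F t ≤ -c) :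
    ∃ t, a ≤ t ∧ H t < 0 := by
  by_contra! hpos
  have hFH : Tendsto (fun t => F t + β * H t) atTop atBot :=
    tendsto_atBot_of_hasDerivAt_le_neg hc
      (fun t ht => (hF t ht).add ((hH t ht).const_mul β)) hle
  have hF_le : ∀ᶠ t in atTop, F t ≤ -1 := by
    filter_upwards [hFH.eventually_le_atBot (-1), eventually_ge_atTop a] with t ht hat
    linarith [mul_nonneg hβ (hpos t hat)]
  obtain ⟨b, hb⟩ := eventually_atTop.1 (hF_le.and (eventually_ge_atTop a))
  have hH_bot : Tendsto H atTop atBot :=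
    tendsto_atBot_of_hasDerivAt_le_neg one_pos (fun t ht => hH t (hb t ht).2)
      (fun t ht => (hb t ht).1)
  obtain ⟨t, hneg, hat⟩ := ((hH_bot.eventually_lt_atBot 0).and (eventually_ge_atTop a)).exists
  exact (hpos t hat).not_gt hneg

/-! ### Integrals against compactly supported densities -/

section Integrals

variable {E : Type*} [NormedAddCommGroup E] [NormedSpace ℝ E] [MeasurableSpace E] [BorelSpace E]
  {μ : Measure E}

theorem integrable_mul_fderiv_of_hasCompactSupport [IsFiniteMeasureOnCompacts μ] {φ h : E → ℝ}
    (hφ : Continuous φ) (hh : ContDiff ℝ 1 h) (hc : HasCompactSupport h) (v : E) :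
    Integrable (fun x => φ x * fderiv ℝ h x v) μ :=
  (hφ.mul ((hh.continuous_fderiv one_ne_zero).clm_apply
    continuous_const)).integrable_of_hasCompactSupport (hc.fderiv_apply ℝ v).mul_left

variable [FiniteDimensional ℝ E]

theorem hasDerivAt_setIntegral_of_contDiff [IsFiniteMeasureOnCompacts μ] {f : ℝ → E → ℝ}
    (hf : ContDiff ℝ 1 (uncurry f)) {S : Set E} (hS : Bornology.IsBounded S)
    (hSm : MeasurableSet S) (t : ℝ) :
    HasDerivAt (fun s => ∫ x in S, f s x ∂μ) (∫ x in S, deriv (fun s => f s x) t ∂μ) t := by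
  have hderiv : ∀ s x, HasDerivAt (fun s => f s x) (fderiv ℝ (uncurry f) (s, x) (1, 0)) s :=
    fun s x => (hf.differentiable one_ne_zero (s, x)).hasFDerivAt.comp_hasDerivAt
      (f := fun s => (s, x)) s ((hasDerivAt_id s).prodMk (hasDerivAt_const s x))
  have hcont' : Continuous fun p : ℝ × E => fderiv ℝ (uncurry f) p (1, 0) :=
    (hf.continuous_fderiv one_ne_zero).clm_apply continuous_const
  have hcont : ∀ s, Continuous (f s) := fun s => hf.continuous.comp (Continuous.prodMk_right s)
  obtain ⟨C, hC⟩ := ((isCompact_Icc (a := t - 1) (b := t + 1)).prod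
    hS.isCompact_closure).exists_bound_of_continuousOn hcont'.continuousOn
  simp only [(hderiv t _).deriv]
  refine (hasDerivAt_integral_of_dominated_loc_of_deriv_le (bound := fun _ => C)
    (Icc_mem_nhds (sub_one_lt t) (lt_add_one t)) (.of_forall fun s => ?_) ?_ ?_ ?_ ?_
    (.of_forall fun x s _ => hderiv s x)).2
  · exact (hcont s).aestronglyMeasurable
  · exact ((hcont t).continuousOn.integrableOn_compact hS.isCompact_closure).mono_set
      subset_closure
  · exact (hcont'.comp (Continuous.prodMk_right t)).aestronglyMeasurable
  · exact ae_restrict_of_forall_mem hSm fun x hx s hs => hC (s, x) ⟨hs, subset_closure hx⟩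
  · exact integrableOn_const hS.measure_lt_top.ne

variable [μ.IsAddHaarMeasure]

theorem integral_mul_fderiv_eq_neg_of_hasCompactSupport {φ h : E → ℝ} (hφ : ContDiff ℝ 1 φ)
    (hh : ContDiff ℝ 1 h) (hc : HasCompactSupport h) (v : E) :
    ∫ x, φ x * fderiv ℝ h x v ∂μ = -∫ x, fderiv ℝ φ x v * h x ∂μ := by
  have hφ' : Continuous fun x => fderiv ℝ φ x v :=
    (hφ.continuous_fderiv one_ne_zero).clm_apply continuous_const
  exact integral_mul_fderiv_eq_neg_fderiv_mul_of_integrable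
    ((hφ'.mul hh.continuous).integrable_of_hasCompactSupport hc.mul_left)
    (integrable_mul_fderiv_of_hasCompactSupport hφ.continuous hh hc v)
    ((hφ.continuous.mul hh.continuous).integrable_of_hasCompactSupport hc.mul_left)
    (fun x _ => hφ.differentiable one_ne_zero x) (fun x _ => hh.differentiable one_ne_zero x)

theorem integrable_comp_sub_mul {k r : E → ℝ} (hk : LocallyIntegrable k μ) (hr : Continuous r)
    (hc : HasCompactSupport r) (x : E) : Integrable (fun y => k (x - y) * r y) μ :=
  (hc.convolutionExists_right (.mul ℝ ℝ) hk hr x).integrable_swap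

theorem contDiff_integral_comp_sub_mul {n : ℕ∞} {k r : E → ℝ} (hk : LocallyIntegrable k μ)
    (hr : ContDiff ℝ n r) (hc : HasCompactSupport r) :
    ContDiff ℝ n (fun x => ∫ y, k (x - y) * r y ∂μ) := by
  have hconv : (fun x => ∫ y, k (x - y) * r y ∂μ) = k ⋆[.mul ℝ ℝ, μ] r :=
    funext fun _ => (convolution_eq_swap (.mul ℝ ℝ)).symm
  exact hconv ▸ hc.contDiff_convolution_right (.mul ℝ ℝ) hk hr

theorem integrable_prod_mul_comp_smul_sub_mul {k r : E → ℝ} (hk : LocallyIntegrable k μ)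
    (hkm : Measurable k) (hr : Continuous r) (hc : HasCompactSupport r) (c : ℝ) :
    Integrable (fun p : E × E => r p.1 * (k (c • p.1 - p.2) * r p.2)) (μ.prod μ) := by
  have hmeas : Measurable fun p : E × E => r p.1 * (k (c • p.1 - p.2) * r p.2) := by fun_prop
  refine (integrable_prod_iff hmeas.aestronglyMeasurable).2
    ⟨.of_forall fun x => (integrable_comp_sub_mul hk hr hc (c • x)).const_mul (r x), ?_⟩
  have hk_norm : LocallyIntegrable (fun z => ‖k z‖) μ := fun z => (hk z).norm
  have hcont : Continuous fun x => ∫ y, ‖k (x - y)‖ * ‖r y‖ ∂μ :=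
    (contDiff_integral_comp_sub_mul (n := 0) hk_norm (contDiff_zero.2 hr.norm) hc.norm).continuous
  simp only [norm_mul, integral_const_mul]
  exact (hr.norm.mul (hcont.comp (continuous_const_smul c))).integrable_of_hasCompactSupport
    hc.norm.mul_right

theorem locallyIntegrable_log_norm [Nontrivial E] :
    LocallyIntegrable (fun x : E => log ‖x‖) μ := by
  refine locallyIntegrable_iff.2 fun S hS => ?_
  obtain ⟨R, hR_pos, hR⟩ := hS.isBounded.exists_pos_norm_lt
  have hball : IntegrableOn (fun x : E => log ‖x‖) (Metric.ball 0 R) μ := by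
    refine (integrableOn_fun_norm_addHaar μ).2 ?_
    exact ((intervalIntegrable_iff_integrableOn_Ioo_of_le hR_pos.le).1
      (intervalIntegral.intervalIntegrable_log'.continuousOn_mul (by fun_prop)))
  exact hball.mono_set fun x hx => mem_ball_zero_iff.2 (hR x hx)

/-- The logarithmic potential `x ↦ ∫ log ‖x - y‖ r(y) dy` of a density `r`;
for `r = ρ t` in the plane it is the gravitational potential up to the factor `g`. -/
def logPotential (μ : Measure E) (r : E → ℝ) (x : E) : ℝ :=
  ∫ y, log ‖x - y‖ * r y ∂μ

section LogPotential

variable [Nontrivial E] {r : E → ℝ}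

theorem contDiff_logPotential {n : ℕ∞} (hr : ContDiff ℝ n r) (hc : HasCompactSupport r) :
    ContDiff ℝ n (logPotential μ r) :=
  contDiff_integral_comp_sub_mul locallyIntegrable_log_norm hr hc

theorem logPotential_smul (hr : Continuous r) (hc : HasCompactSupport r) {c : ℝ} (h0 : c ≠ 0)
    (x : E) :
    logPotential μ r (c • x) = log |c| * (∫ y, r y ∂μ) + ∫ y, log ‖c⁻¹ • y - x‖ * r y ∂μ := by
  have hsplit : ∀ y, y ≠ c • x → log ‖c • x - y‖ = log |c| + log ‖c⁻¹ • y - x‖ := fun y hy => by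
    have hne : c⁻¹ • y - x ≠ 0 := by rwa [sub_ne_zero, Ne, inv_smul_eq_iff₀ h0]
    rw [← log_mul (abs_ne_zero.2 h0) (norm_ne_zero_iff.2 hne), ← Real.norm_eq_abs, ← norm_smul,
      smul_sub, smul_inv_smul₀ h0, norm_sub_rev]
  have hae : (fun y => log ‖c • x - y‖ * r y - log |c| * r y)
      =ᵐ[μ] fun y => log ‖c⁻¹ • y - x‖ * r y := by
    filter_upwards [Measure.ae_ne μ (c • x)] with y hy
    rw [hsplit y hy]; ring
  rw [← integral_congr_ae hae, integral_sub (integrable_comp_sub_mul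
    locallyIntegrable_log_norm hr hc _) ((hr.integrable_of_hasCompactSupport hc).const_mul _),
    integral_const_mul, logPotential]
  ring

theorem integral_mul_logPotential_smul (hr : Continuous r) (hc : HasCompactSupport r) {c : ℝ}
    (h0 : c ≠ 0) :
    ∫ x, r x * logPotential μ r (c • x) ∂μ
      = (∫ x, r x ∂μ) ^ 2 * log |c| + ∫ x, r x * logPotential μ r (c⁻¹ • x) ∂μ := by
  have hint : Integrable (uncurry fun y x => r y * (log ‖c⁻¹ • y - x‖ * r x)) (μ.prod μ) :=
    integrable_prod_mul_comp_smul_sub_mul locallyIntegrable_log_norm (by fun_prop) hr hc c⁻¹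
  have hpull : ∀ x, ∫ y, r y * (log ‖c⁻¹ • y - x‖ * r x) ∂μ
      = r x * ∫ y, log ‖c⁻¹ • y - x‖ * r y ∂μ := fun x => by
    rw [← integral_const_mul]; congr with y; ring
  have hint' : Integrable (fun x => r x * ∫ y, log ‖c⁻¹ • y - x‖ * r y ∂μ) μ :=
    hint.integral_prod_right.congr (.of_forall hpull)
  have hswap : ∫ x, r x * (∫ y, log ‖c⁻¹ • y - x‖ * r y ∂μ) ∂μ
      = ∫ y, r y * logPotential μ r (c⁻¹ • y) ∂μ := by
    simp only [← hpull, logPotential, ← integral_const_mul (r _)]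
    exact (integral_integral_swap hint).symm
  simp only [logPotential_smul hr hc h0, mul_add]
  rw [integral_add ((hr.integrable_of_hasCompactSupport hc).mul_const _) hint', hswap,
    integral_mul_const]
  ring

theorem hasDerivAt_integral_mul_logPotential_smul (hr : ContDiff ℝ 1 r)
    (hc : HasCompactSupport r) :
    HasDerivAt (fun c : ℝ => ∫ x, r x * logPotential μ r (c • x) ∂μ)
      (∫ x, r x * fderiv ℝ (logPotential μ r) x x ∂μ) 1 := by
  have hΦ : ContDiff ℝ 1 (logPotential μ r) := contDiff_logPotential hr hc
  have hderiv : ∀ x, deriv (fun c : ℝ => r x * logPotential μ r (c • x)) 1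
      = r x * fderiv ℝ (logPotential μ r) x x := fun x => by
    have hline : HasDerivAt (fun c : ℝ => c • x) x 1 := by
      simpa only [one_smul] using (hasDerivAt_id' (1 : ℝ)).smul_const x
    have hΦx := (hΦ.differentiable one_ne_zero ((1 : ℝ) • x)).hasFDerivAt.comp_hasDerivAt 1 hline
    simpa only [one_smul, Function.comp_apply] using (hΦx.const_mul (r x)).deriv
  have hset : ∀ f : E → ℝ, ∫ x in tsupport r, r x * f x ∂μ = ∫ x, r x * f x ∂μ := fun f =>
    setIntegral_eq_integral_of_forall_compl_eq_zero fun x hx => by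
      rw [image_eq_zero_of_notMem_tsupport hx, zero_mul]
  have hmoved : ContDiff ℝ 1 (uncurry fun (c : ℝ) x => r x * logPotential μ r (c • x)) :=
    (hr.comp contDiff_snd).mul (hΦ.comp (contDiff_fst.smul contDiff_snd))
  simpa only [hderiv, hset] using hasDerivAt_setIntegral_of_contDiff (μ := μ) hmoved
    hc.isBounded hc.isClosed.measurableSet 1

theorem integral_mul_fderiv_logPotential_self (hr : ContDiff ℝ 1 r) (hc : HasCompactSupport r) :
    ∫ x, r x * fderiv ℝ (logPotential μ r) x x ∂μ = (∫ x, r x ∂μ) ^ 2 / 2 := by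
  -- Differentiate `J(c) = M² log |c| + J(1/c)` at `c = 1`, where `J(c) = ∫ r(x) Φ(cx) dx`.
  have hJ := hasDerivAt_integral_mul_logPotential_smul (μ := μ) hr hc
  have hJ_inv := (inv_one (G := ℝ) ▸ hJ).comp (1 : ℝ) (hasDerivAt_inv one_ne_zero)
  have hlog := (hasDerivAt_log one_ne_zero).const_mul ((∫ x, r x ∂μ) ^ 2)
  have huniq := hJ.unique <| (hlog.add hJ_inv).congr_of_eventuallyEq <| by
    filter_upwards [eventually_ne_nhds one_ne_zero] with c hc0
    simp only [integral_mul_logPotential_smul hr.continuous hc hc0, log_abs, Pi.add_apply,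
      Function.comp_apply]
  simp only [inv_one, one_pow] at huniq
  linarith

end LogPotential

end Integrals

/-! ### Divergence and gravitational potential on Euclidean space -/

section EuclideanCalculus

variable {N : ℕ}

theorem fderiv_apply_eq_sum_mul_epartial (φ : Euc N → ℝ) (x v : Euc N) :
    fderiv ℝ φ x v = ∑ i, v i * epartial i φ x := by
  conv_lhs => rw [← (EuclideanSpace.basisFun (Fin N) ℝ).sum_repr v]
  simp only [map_sum, map_smul, smul_eq_mul, EuclideanSpace.basisFun_repr,
    EuclideanSpace.basisFun_apply, epartial]

theorem integrable_mul_ediv {φ : Euc N → ℝ} {w : Euc N → Euc N} (hφ : Continuous φ)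
    (hw : ContDiff ℝ 1 w) (hc : HasCompactSupport w) : Integrable fun x => φ x * ediv w x := by
  simp only [ediv, Finset.mul_sum]
  exact integrable_finsetSum _ fun i _ =>
    integrable_mul_fderiv_of_hasCompactSupport hφ (contDiff_euclidean.1 hw i)
      (hc.comp_left (g := fun v : Euc N => v i) rfl) _

theorem integral_mul_ediv {φ : Euc N → ℝ} {w : Euc N → Euc N} (hφ : ContDiff ℝ 1 φ)
    (hw : ContDiff ℝ 1 w) (hc : HasCompactSupport w) :
    ∫ x, φ x * ediv w x = -∫ x, fderiv ℝ φ x (w x) := by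
  have hwi : ∀ i, ContDiff ℝ 1 fun x => w x i := contDiff_euclidean.1 hw
  have hci : ∀ i, HasCompactSupport fun x => w x i := fun i =>
    hc.comp_left (g := fun v : Euc N => v i) rfl
  have hgrad : ∀ i, Integrable fun x => w x i * epartial i φ x := fun i =>
    ((hwi i).continuous.mul ((hφ.continuous_fderiv one_ne_zero).clm_apply
      continuous_const)).integrable_of_hasCompactSupport (hci i).mul_right
  simp only [ediv, fderiv_apply_eq_sum_mul_epartial φ, Finset.mul_sum]
  rw [integral_finsetSum _ fun i _ => integrable_mul_fderiv_of_hasCompactSupport hφ.continuous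
    (hwi i) (hci i) _, integral_finsetSum _ fun i _ => hgrad i, ← Finset.sum_neg_distrib]
  refine Finset.sum_congr rfl fun i _ => ?_
  rw [integral_mul_fderiv_eq_neg_of_hasCompactSupport hφ (hwi i) (hci i)]
  simp only [epartial, mul_comm]

theorem ediv_fun_add {v w : Euc N → Euc N} {x : Euc N} (hv : DifferentiableAt ℝ v x)
    (hw : DifferentiableAt ℝ w x) : ediv (fun y => v y + w y) x = ediv v x + ediv w x := by
  have hv' := differentiableAt_euclidean.1 hv
  have hw' := differentiableAt_euclidean.1 hw
  simp only [ediv, PiLp.add_apply, ← Finset.sum_add_distrib]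
  exact Finset.sum_congr rfl fun i _ => by rw [fderiv_fun_add (hv' i) (hw' i), add_apply]

theorem ediv_smul_single (f : Euc N → ℝ) (j : Fin N) (x : Euc N) :
    ediv (fun y => f y • EuclideanSpace.single j 1) x = epartial j f x := by
  rw [ediv, Finset.sum_eq_single j (fun i _ hij => ?_) (by simp)]
  · simp [epartial]
  · simp [hij]

theorem fderiv_coord_apply (j : Fin N) (x v : Euc N) :
    fderiv ℝ (fun y : Euc N => y j) x v = v j :=
  congrArg (· v) (EuclideanSpace.proj (𝕜 := ℝ) j).fderiv

theorem locallyIntegrable_green (N : ℕ) : LocallyIntegrable (green N) := by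
  unfold green
  obtain rfl | hN0 := eq_or_ne N 0
  · exact (continuous_of_const fun x y => by rw [Subsingleton.elim x y]).locallyIntegrable
  obtain rfl | hN := eq_or_ne N 2
  · simpa only [if_true] using locallyIntegrable_log_norm
  simp only [if_neg hN]
  have hdim : Module.finrank ℝ (Euc N) = N := finrank_euclideanSpace_fin
  have hmeas : Measurable fun x : Euc N => ‖x‖ ^ ((2 : ℝ) - N) :=
    measurable_norm.pow_const _
  refine (locallyIntegrable_of_norm_le_rpow (C := 1) (α := (N : ℝ) - 2) (by rw [hdim]; omega)
    (by rw [hdim]; linarith) (.of_forall fun x => ?_) hmeas.aestronglyMeasurable).neg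
  rw [norm_rpow_of_nonneg (norm_nonneg x), norm_norm, one_mul, neg_sub]

theorem contDiff_potential {g t : ℝ} {ρ : ℝ → Euc N → ℝ} (hr : ContDiff ℝ 1 (ρ t))
    (hc : HasCompactSupport (ρ t)) : ContDiff ℝ 1 (potential N g ρ t) :=
  contDiff_const.mul (contDiff_integral_comp_sub_mul (locallyIntegrable_green N) hr hc)

theorem potential_two_eq_const_mul_logPotential (g t : ℝ) (ρ : ℝ → Euc 2 → ℝ) :
    potential 2 g ρ t = fun x => g * logPotential volume (ρ t) x := by
  funext x
  simp only [potential, green, if_true, logPotential]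

end EuclideanCalculus

/-! ### Momentum moment of Euler–Poisson solutions -/

/-- The flux `ρ u_j u + P e_j` of the `j`-th component of the momentum `ρ u`. -/
def momentumFlux {N : ℕ} (K γ : ℝ) (ρ : ℝ → Euc N → ℝ) (u : ℝ → Euc N → Euc N) (j : Fin N)
    (t : ℝ) (x : Euc N) : Euc N :=
  (ρ t x * u t x j) • u t x + (K * ρ t x ^ γ) • EuclideanSpace.single j 1

theorem momentumFlux_eq_zero {N : ℕ} {K γ t : ℝ} {ρ : ℝ → Euc N → ℝ} {u : ℝ → Euc N → Euc N}
    {j : Fin N} {x : Euc N} (hγ : γ ≠ 0) (hx : ρ t x = 0) : momentumFlux K γ ρ u j t x = 0 := by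
  rw [momentumFlux, hx, zero_rpow hγ, zero_mul, mul_zero, zero_smul, zero_smul, add_zero]

/-- The moment `∫_Ω ρ x · u dx` of the momentum field, half the time derivative of the second
inertia function. -/
def momentumMoment (N : ℕ) (Ω : Set (Euc N)) (ρ : ℝ → Euc N → ℝ) (u : ℝ → Euc N → Euc N)
    (t : ℝ) : ℝ :=
  ∫ x in Ω, ρ t x * ⟪x, u t x⟫

namespace IsEPSolution

variable {N : ℕ} {K γ β g : ℝ} {Ω : Set (Euc N)} {T : EReal} {ρ : ℝ → Euc N → ℝ}
  {u : ℝ → Euc N → Euc N} {t : ℝ}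

theorem contDiff_rho (hsol : IsEPSolution N K γ β g Ω T ρ u) (t : ℝ) : ContDiff ℝ 1 (ρ t) :=
  hsol.rho_C1.comp (contDiff_prodMk_right t)

theorem contDiff_u (hsol : IsEPSolution N K γ β g Ω T ρ u) (t : ℝ) : ContDiff ℝ 1 (u t) :=
  hsol.u_C1.comp (contDiff_prodMk_right t)

theorem contDiff_pressure (hsol : IsEPSolution N K γ β g Ω T ρ u) (hγ : 1 ≤ γ) (t : ℝ) :
    ContDiff ℝ 1 (fun x => K * ρ t x ^ γ) := by
  have hρ : ContDiff ℝ ((1 : ℕ) : WithTop ℕ∞) (ρ t) := by exact_mod_cast hsol.contDiff_rho t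
  exact contDiff_const.mul (by exact_mod_cast hρ.rpow_const_of_le (by exact_mod_cast hγ))

theorem rho_eq_zero_of_notMem (hsol : IsEPSolution N K γ β g Ω T ρ u) (ht : 0 ≤ t)
    (htT : (t : EReal) < T) {x : Euc N} (hx : x ∉ Ω) : ρ t x = 0 :=
  Function.notMem_support.1 fun h => hx (hsol.support_subset t ht htT h)

theorem hasCompactSupport_rho (hsol : IsEPSolution N K γ β g Ω T ρ u) (ht : 0 ≤ t)
    (htT : (t : EReal) < T) : HasCompactSupport (ρ t) :=
  .intro hsol.omega_bounded.isCompact_closure fun _ hx =>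
    hsol.rho_eq_zero_of_notMem ht htT fun h => hx (subset_closure h)

theorem hasCompactSupport_of_forall_rho_eq_zero (hsol : IsEPSolution N K γ β g Ω T ρ u)
    (ht : 0 ≤ t) (htT : (t : EReal) < T) {F : Type*} [Zero F] {f : Euc N → F}
    (h0 : ∀ x, ρ t x = 0 → f x = 0) : HasCompactSupport f :=
  (hsol.hasCompactSupport_rho ht htT).mono fun x hx hρ => hx (h0 x hρ)

theorem integrable_of_forall_rho_eq_zero (hsol : IsEPSolution N K γ β g Ω T ρ u)
    (ht : 0 ≤ t) (htT : (t : EReal) < T) {f : Euc N → ℝ} (hf : Continuous f)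
    (h0 : ∀ x, ρ t x = 0 → f x = 0) : Integrable f :=
  hf.integrable_of_hasCompactSupport (hsol.hasCompactSupport_of_forall_rho_eq_zero ht htT h0)

theorem setIntegral_eq_integral (hsol : IsEPSolution N K γ β g Ω T ρ u)
    (ht : 0 ≤ t) (htT : (t : EReal) < T) {f : Euc N → ℝ} (h0 : ∀ x, ρ t x = 0 → f x = 0) :
    ∫ x in Ω, f x = ∫ x, f x :=
  setIntegral_eq_integral_of_forall_compl_eq_zero fun x hx =>
    h0 x (hsol.rho_eq_zero_of_notMem ht htT hx)

theorem hasDerivAt_setIntegral_rho_mul (hsol : IsEPSolution N K γ β g Ω T ρ u) (ht : 0 < t)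
    (htT : (t : EReal) < T) {q : ℝ → Euc N → ℝ} (hq : ContDiff ℝ 1 (uncurry q)) :
    HasDerivAt (fun s => ∫ x in Ω, ρ s x * q s x) (∫ x, deriv (fun s => ρ s x * q s x) t) t := by
  have hinterval : ∀ᶠ s : ℝ in 𝓝 t, 0 ≤ s ∧ (s : EReal) < T :=
    ((lt_mem_nhds ht).mono fun _ => le_of_lt).and
      (continuous_coe_real_ereal.continuousAt.eventually (gt_mem_nhds htT))
  have hzero : ∀ x, x ∉ Ω → deriv (fun s => ρ s x * q s x) t = 0 := fun x hx => by
    have hloc : (fun s => ρ s x * q s x) =ᶠ[𝓝 t] fun _ => 0 := hinterval.mono fun s hs => by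
      simp only [hsol.rho_eq_zero_of_notMem hs.1 hs.2 hx, zero_mul]
    rw [hloc.deriv_eq, deriv_const]
  rw [← setIntegral_eq_integral_of_forall_compl_eq_zero hzero]
  exact hasDerivAt_setIntegral_of_contDiff (f := fun s x => ρ s x * q s x) (hsol.rho_C1.mul hq)
    hsol.omega_bounded hsol.omega_open.measurableSet t

theorem integral_mul_deriv_rho (hsol : IsEPSolution N K γ β g Ω T ρ u) (ht : 0 ≤ t)
    (htT : (t : EReal) < T) {φ : Euc N → ℝ} (hφ : ContDiff ℝ 1 φ) :
    ∫ x, φ x * deriv (fun s => ρ s x) t = ∫ x, ρ t x * fderiv ℝ φ x (u t x) := by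
  have hcont : ∀ x, deriv (fun s => ρ s x) t = -ediv (fun y => ρ t y • u t y) x := fun x =>
    eq_neg_of_add_eq_zero_left (hsol.continuity_eq t ht htT x)
  simp only [hcont, mul_neg, integral_neg]
  rw [integral_mul_ediv hφ ((hsol.contDiff_rho t).fun_smul (hsol.contDiff_u t))
    (hsol.hasCompactSupport_rho ht htT).smul_right, neg_neg]
  simp only [map_smul, smul_eq_mul]

theorem contDiff_momentumFlux (hsol : IsEPSolution N K γ β g Ω T ρ u) (hγ : 1 ≤ γ) (t : ℝ)
    (j : Fin N) : ContDiff ℝ 1 (momentumFlux K γ ρ u j t) :=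
  (((hsol.contDiff_rho t).mul (contDiff_euclidean.1 (hsol.contDiff_u t) j)).smul
    (hsol.contDiff_u t)).add ((hsol.contDiff_pressure hγ t).smul contDiff_const)

theorem hasCompactSupport_momentumFlux (hsol : IsEPSolution N K γ β g Ω T ρ u) (hγ : γ ≠ 0)
    (ht : 0 ≤ t) (htT : (t : EReal) < T) (j : Fin N) :
    HasCompactSupport (momentumFlux K γ ρ u j t) :=
  hsol.hasCompactSupport_of_forall_rho_eq_zero ht htT fun _ => momentumFlux_eq_zero hγ

theorem integrable_fderiv_momentumFlux (hsol : IsEPSolution N K γ β g Ω T ρ u) (hγ : 1 ≤ γ)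
    (ht : 0 ≤ t) (htT : (t : EReal) < T) (j : Fin N) {φ : Euc N → ℝ} (hφ : ContDiff ℝ 1 φ) :
    Integrable fun x => fderiv ℝ φ x (momentumFlux K γ ρ u j t x) :=
  hsol.integrable_of_forall_rho_eq_zero ht htT
    ((hφ.continuous_fderiv one_ne_zero).clm_apply (hsol.contDiff_momentumFlux hγ t j).continuous)
    fun _ hx => by rw [momentumFlux_eq_zero (zero_lt_one.trans_le hγ).ne' hx, map_zero]

theorem ediv_momentumFlux (hsol : IsEPSolution N K γ β g Ω T ρ u) (hγ : 1 ≤ γ) (t : ℝ)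
    (j : Fin N) (x : Euc N) :
    ediv (momentumFlux K γ ρ u j t) x
      = ∑ i, epartial i (fun y => ρ t y * u t y i * u t y j) x
        + epartial j (fun y => K * ρ t y ^ γ) x := by
  have huj : ContDiff ℝ 1 fun y => u t y j := contDiff_euclidean.1 (hsol.contDiff_u t) j
  unfold momentumFlux
  rw [ediv_fun_add
    ((((hsol.contDiff_rho t).mul huj).fun_smul (hsol.contDiff_u t)).differentiable one_ne_zero x)
    (((hsol.contDiff_pressure hγ t).fun_smul contDiff_const).differentiable one_ne_zero x),
    ediv_smul_single]
  simp only [ediv, epartial, PiLp.smul_apply, smul_eq_mul, mul_right_comm]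

theorem deriv_momentum_eq (hsol : IsEPSolution N K γ β g Ω T ρ u) (hγ : 1 ≤ γ) (ht : 0 ≤ t)
    (htT : (t : EReal) < T) (j : Fin N) (x : Euc N) :
    deriv (fun s => ρ s x * u s x j) t = -ediv (momentumFlux K γ ρ u j t) x
      - ρ t x * (epartial j (potential N g ρ t) x + β * u t x j) := by
  rw [hsol.ediv_momentumFlux hγ]
  linear_combination hsol.momentum_eq t ht htT x j

theorem integrable_mul_force (hsol : IsEPSolution N K γ β g Ω T ρ u) (ht : 0 ≤ t)
    (htT : (t : EReal) < T) (j : Fin N) {φ : Euc N → ℝ} (hφ : Continuous φ) :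
    Integrable fun x => φ x * (ρ t x * (epartial j (potential N g ρ t) x + β * u t x j)) := by
  have hpot : ContDiff ℝ 1 (potential N g ρ t) :=
    contDiff_potential (hsol.contDiff_rho t) (hsol.hasCompactSupport_rho ht htT)
  have hgrad : Continuous fun x => epartial j (potential N g ρ t) x :=
    (hpot.continuous_fderiv one_ne_zero).clm_apply continuous_const
  have huj : Continuous fun x => u t x j := (contDiff_euclidean.1 (hsol.contDiff_u t) j).continuous
  refine hsol.integrable_of_forall_rho_eq_zero ht htT ?_ fun x hx => by rw [hx, zero_mul, mul_zero]
  exact hφ.mul ((hsol.contDiff_rho t).continuous.mul (hgrad.add (huj.const_mul β)))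

theorem integrable_mul_deriv_momentum (hsol : IsEPSolution N K γ β g Ω T ρ u) (hγ : 1 ≤ γ)
    (ht : 0 ≤ t) (htT : (t : EReal) < T) (j : Fin N) {φ : Euc N → ℝ} (hφ : Continuous φ) :
    Integrable fun x => φ x * deriv (fun s => ρ s x * u s x j) t := by
  simp only [hsol.deriv_momentum_eq hγ ht htT, mul_sub, mul_neg]
  exact (integrable_mul_ediv hφ (hsol.contDiff_momentumFlux hγ t j)
    (hsol.hasCompactSupport_momentumFlux (zero_lt_one.trans_le hγ).ne' ht htT j)).fun_neg.sub
    (hsol.integrable_mul_force ht htT j hφ)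

theorem integral_mul_deriv_momentum (hsol : IsEPSolution N K γ β g Ω T ρ u) (hγ : 1 ≤ γ)
    (ht : 0 ≤ t) (htT : (t : EReal) < T) (j : Fin N) {φ : Euc N → ℝ} (hφ : ContDiff ℝ 1 φ) :
    ∫ x, φ x * deriv (fun s => ρ s x * u s x j) t
      = ∫ x, (fderiv ℝ φ x (momentumFlux K γ ρ u j t x)
        - φ x * (ρ t x * (epartial j (potential N g ρ t) x + β * u t x j))) := by
  have hflux := hsol.contDiff_momentumFlux hγ t j
  have hsupp := hsol.hasCompactSupport_momentumFlux (zero_lt_one.trans_le hγ).ne' ht htT j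
  have hforce := hsol.integrable_mul_force ht htT j hφ.continuous
  simp only [hsol.deriv_momentum_eq hγ ht htT, mul_sub, mul_neg]
  rw [integral_sub (integrable_mul_ediv hφ.continuous hflux hsupp).fun_neg hforce, integral_neg,
    integral_mul_ediv hφ hflux hsupp, neg_neg, ← integral_sub
      (hsol.integrable_fderiv_momentumFlux hγ ht htT j hφ) hforce]

theorem hasDerivAt_inertia (hsol : IsEPSolution N K γ β g Ω T ρ u) (ht : 0 < t)
    (htT : (t : EReal) < T) :
    HasDerivAt (inertia N Ω ρ) (2 * momentumMoment N Ω ρ u t) t := by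
  have hderiv : ∀ x, deriv (fun s => ρ s x * ‖x‖ ^ 2) t = ‖x‖ ^ 2 * deriv (fun s => ρ s x) t :=
    fun x => by rw [deriv_mul_const_field, mul_comm]
  have hgrad : ∀ x, ρ t x * fderiv ℝ (fun y : Euc N => ‖y‖ ^ 2) x (u t x)
      = 2 * (ρ t x * ⟪x, u t x⟫) := fun x => by
    rw [fderiv_norm_sq_apply, smul_apply, innerSL_apply_apply, nsmul_eq_mul]
    push_cast; ring
  refine (hsol.hasDerivAt_setIntegral_rho_mul ht htT (q := fun _ x => ‖x‖ ^ 2)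
    ((contDiff_norm_sq ℝ).comp contDiff_snd)).congr_deriv ?_
  simp only [hderiv]
  rw [hsol.integral_mul_deriv_rho ht.le htT (contDiff_norm_sq ℝ), momentumMoment,
    hsol.setIntegral_eq_integral ht.le htT fun x hx => by rw [hx, zero_mul],
    ← integral_const_mul]
  simp only [hgrad]

theorem sum_fderiv_coord_momentumFlux (K γ : ℝ) (ρ : ℝ → Euc N → ℝ) (u : ℝ → Euc N → Euc N)
    (t : ℝ) (x : Euc N) :
    ∑ j, fderiv ℝ (fun y : Euc N => y j) x (momentumFlux K γ ρ u j t x)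
      = ρ t x * ‖u t x‖ ^ 2 + N * (K * ρ t x ^ γ) := by
  have hflux : ∀ j, momentumFlux K γ ρ u j t x j = ρ t x * u t x j ^ 2 + K * ρ t x ^ γ :=
    fun j => by simp [momentumFlux, pow_two, mul_assoc]
  simp only [fderiv_coord_apply, hflux, Finset.sum_add_distrib, EuclideanSpace.real_norm_sq_eq,
    Finset.mul_sum, Finset.sum_const, Finset.card_univ, Fintype.card_fin, nsmul_eq_mul]

theorem sum_coord_mul_force (x : Euc N) :
    ∑ j, x j * (ρ t x * (epartial j (potential N g ρ t) x + β * u t x j))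
      = ρ t x * fderiv ℝ (potential N g ρ t) x x + β * (ρ t x * ⟪x, u t x⟫) := by
  simp only [fderiv_apply_eq_sum_mul_epartial (potential N g ρ t), PiLp.inner_apply,
    Real.inner_apply, Finset.mul_sum, ← Finset.sum_add_distrib]
  exact Finset.sum_congr rfl fun j _ => by ring

theorem deriv_rho_mul_inner (hsol : IsEPSolution N K γ β g Ω T ρ u) (t : ℝ) (x : Euc N) :
    deriv (fun s => ρ s x * ⟪x, u s x⟫) t
      = ∑ j, x j * deriv (fun s => ρ s x * u s x j) t := by
  have hdiff : ∀ j, DifferentiableAt ℝ (fun s => ρ s x * u s x j) t := fun j =>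
    ((hsol.rho_C1.mul (contDiff_euclidean.1 hsol.u_C1 j)).comp
      (contDiff_prodMk_left x)).differentiable one_ne_zero t
  rw [← (HasDerivAt.fun_sum fun j _ => (hdiff j).hasDerivAt.const_mul (x j)).deriv]
  simp only [PiLp.inner_apply, Real.inner_apply, Finset.mul_sum, mul_left_comm]

theorem integral_deriv_rho_mul_inner (hsol : IsEPSolution N K γ β g Ω T ρ u) (hγ : 1 ≤ γ)
    (ht : 0 ≤ t) (htT : (t : EReal) < T) :
    ∫ x, deriv (fun s => ρ s x * ⟪x, u s x⟫) t
      = ∫ x, (ρ t x * ‖u t x‖ ^ 2 + N * (K * ρ t x ^ γ)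
        - (ρ t x * fderiv ℝ (potential N g ρ t) x x + β * (ρ t x * ⟪x, u t x⟫))) := by
  have hcoord : ∀ j, ContDiff ℝ 1 fun x : Euc N => x j := contDiff_euclidean.1 contDiff_id
  have hint : ∀ j, Integrable fun x => fderiv ℝ (fun y : Euc N => y j) x
      (momentumFlux K γ ρ u j t x)
        - x j * (ρ t x * (epartial j (potential N g ρ t) x + β * u t x j)) := fun j =>
    (hsol.integrable_fderiv_momentumFlux hγ ht htT j (hcoord j)).sub
      (hsol.integrable_mul_force ht htT j (hcoord j).continuous)
  simp only [hsol.deriv_rho_mul_inner]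
  rw [integral_finsetSum _ fun j _ =>
      hsol.integrable_mul_deriv_momentum hγ ht htT j (hcoord j).continuous,
    Finset.sum_congr rfl fun j _ => hsol.integral_mul_deriv_momentum hγ ht htT j (hcoord j),
    ← integral_finsetSum _ fun j _ => hint j]
  simp only [Finset.sum_sub_distrib, sum_fderiv_coord_momentumFlux, sum_coord_mul_force]

theorem hasDerivAt_momentumMoment (hsol : IsEPSolution N K γ β g Ω T ρ u) (hγ : 1 ≤ γ)
    (ht : 0 < t) (htT : (t : EReal) < T) :
    HasDerivAt (momentumMoment N Ω ρ u)
      ((∫ x in Ω, (ρ t x * ‖u t x‖ ^ 2 + N * (K * ρ t x ^ γ)))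
        - (∫ x in Ω, ρ t x * fderiv ℝ (potential N g ρ t) x x)
        - β * momentumMoment N Ω ρ u t) t := by
  refine (hsol.hasDerivAt_setIntegral_rho_mul ht htT (q := fun s x => ⟪x, u s x⟫)
    (contDiff_snd.inner ℝ hsol.u_C1)).congr_deriv ?_
  have hpot : ContDiff ℝ 1 (potential N g ρ t) :=
    contDiff_potential (hsol.contDiff_rho t) (hsol.hasCompactSupport_rho ht.le htT)
  have hρ := (hsol.contDiff_rho t).continuous
  have hu := (hsol.contDiff_u t).continuous
  have hkin_zero : ∀ x, ρ t x = 0 → ρ t x * ‖u t x‖ ^ 2 + N * (K * ρ t x ^ γ) = 0 :=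
    fun x hx => by rw [hx, zero_rpow (by linarith), zero_mul, mul_zero, mul_zero, add_zero]
  have hgrav_zero : ∀ x, ρ t x = 0 → ρ t x * fderiv ℝ (potential N g ρ t) x x = 0 :=
    fun x hx => by rw [hx, zero_mul]
  have hmom_zero : ∀ x, ρ t x = 0 → ρ t x * ⟪x, u t x⟫ = 0 := fun x hx => by rw [hx, zero_mul]
  have hkin : Integrable fun x => ρ t x * ‖u t x‖ ^ 2 + N * (K * ρ t x ^ γ) :=
    hsol.integrable_of_forall_rho_eq_zero ht.le htT ((hρ.mul (hu.norm.pow 2)).add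
      ((hsol.contDiff_pressure hγ t).continuous.const_mul N)) hkin_zero
  have hgrav : Integrable fun x => ρ t x * fderiv ℝ (potential N g ρ t) x x :=
    hsol.integrable_of_forall_rho_eq_zero ht.le htT
      (hρ.mul ((hpot.continuous_fderiv one_ne_zero).clm_apply continuous_id)) hgrav_zero
  have hmom : Integrable fun x => ρ t x * ⟪x, u t x⟫ :=
    hsol.integrable_of_forall_rho_eq_zero ht.le htT (hρ.mul (continuous_id.inner hu)) hmom_zero
  rw [hsol.integral_deriv_rho_mul_inner hγ ht.le htT, integral_sub hkin
    (hgrav.fun_add (hmom.const_mul β)), integral_add hgrav (hmom.const_mul β),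
    integral_const_mul, momentumMoment, sub_sub,
    hsol.setIntegral_eq_integral ht.le htT hkin_zero,
    hsol.setIntegral_eq_integral ht.le htT hgrav_zero,
    hsol.setIntegral_eq_integral ht.le htT hmom_zero]

end IsEPSolution

theorem integral_mul_fderiv_potential_two {g : ℝ} {ρ : ℝ → Euc 2 → ℝ} {t : ℝ}
    (hr : ContDiff ℝ 1 (ρ t)) (hc : HasCompactSupport (ρ t)) :
    ∫ x, ρ t x * fderiv ℝ (potential 2 g ρ t) x x = g * (∫ x, ρ t x) ^ 2 / 2 := by
  have hgrad : ∀ x, fderiv ℝ (potential 2 g ρ t) x x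
      = g * fderiv ℝ (logPotential volume (ρ t)) x x := fun x => by
    rw [potential_two_eq_const_mul_logPotential, fderiv_const_mul
      ((contDiff_logPotential hr hc).differentiable one_ne_zero x), smul_apply, smul_eq_mul]
  simp only [hgrad, mul_left_comm _ g]
  rw [integral_const_mul, integral_mul_fderiv_logPotential_self hr hc, mul_div_assoc]

theorem IsEPSolution.hasDerivAt_momentumMoment_two {K γ β g : ℝ} {Ω : Set (Euc 2)} {T : EReal}
    {ρ : ℝ → Euc 2 → ℝ} {u : ℝ → Euc 2 → Euc 2} {t : ℝ}
    (hsol : IsEPSolution 2 K γ β g Ω T ρ u) (hγ : 1 ≤ γ) (ht : 0 < t) (htT : (t : EReal) < T) :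
    HasDerivAt (momentumMoment 2 Ω ρ u)
      ((∫ x in Ω, (ρ t x * ‖u t x‖ ^ 2 + 2 * (K * ρ t x ^ γ)))
        - g * (∫ x in Ω, ρ t x) ^ 2 / 2 - β * momentumMoment 2 Ω ρ u t) t := by
  have hgrav : ∫ x in Ω, ρ t x * fderiv ℝ (potential 2 g ρ t) x x
      = g * (∫ x in Ω, ρ t x) ^ 2 / 2 := by
    rw [hsol.setIntegral_eq_integral ht.le htT fun x hx => by rw [hx, zero_mul],
      hsol.setIntegral_eq_integral ht.le htT fun x hx => hx]
    exact integral_mul_fderiv_potential_two (hsol.contDiff_rho t)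
      (hsol.hasCompactSupport_rho ht.le htT)
  exact hgrav ▸ hsol.hasDerivAt_momentumMoment hγ ht htT

theorem euler_poisson_2d_nonglobal_general {K γ β g : ℝ} (hβ : 0 ≤ β) (hγ : 1 ≤ γ)
    {Ω : Set (Euc 2)} {T : EReal} {ρ : ℝ → Euc 2 → ℝ} {u : ℝ → Euc 2 → Euc 2}
    (hsol : IsEPSolution 2 K γ β g Ω T ρ u) {ε : ℝ} (hε : 0 < ε)
    (hineq : ∀ t : ℝ, 0 ≤ t → (t : EReal) < T →
      2 * (∫ x in Ω, (ρ t x * ‖u t x‖ ^ 2 + 2 * (K * ρ t x ^ γ))) <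
        g * (∫ x in Ω, ρ t x) ^ 2 - ε) :
    T < ⊤ := by
  by_contra hT
  obtain rfl : T = ⊤ := not_lt_top_iff.1 hT
  have hpos : ∀ t : ℝ, 1 ≤ t → 0 < t := fun t ht => one_pos.trans_le ht
  obtain ⟨t, -, hneg⟩ := exists_neg_of_deriv_deriv_add_mul_le_neg hβ hε
    (fun t ht => hsol.hasDerivAt_inertia (hpos t ht) (EReal.coe_lt_top t))
    (fun t ht => (hsol.hasDerivAt_momentumMoment_two hγ (hpos t ht)
      (EReal.coe_lt_top t)).const_mul 2)
    (fun t ht => by linarith [hineq t (hpos t ht).le (EReal.coe_lt_top t)])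
  exact hneg.not_ge (integral_nonneg fun x => mul_nonneg (hsol.rho_nonneg t x) (sq_nonneg ‖x‖))

/-- A classical solution of the 2-D Euler–Poisson equations without
damping with `2∫_Ω (ρ|u|² + 2P) dx < gM² - ε` on its whole lifespan `[0,T)`
cannot be global: `T` must be finite. -/
theorem euler_poisson_2d_nonglobal (K γ g : ℝ) (hK : 0 < K) (hγ : 1 ≤ γ) (hg : 0 < g)
    (Ω : Set (Euc 2)) (T : EReal) (hT : 0 < T)
    (ρ : ℝ → Euc 2 → ℝ) (u : ℝ → Euc 2 → Euc 2)
    (hsol : IsEPSolution 2 K γ 0 g Ω T ρ u)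
    (ε : ℝ) (hε : 0 < ε)
    (hineq : ∀ t : ℝ, 0 ≤ t → (t : EReal) < T →
      2 * (∫ x in Ω, (ρ t x * ‖u t x‖ ^ 2 + 2 * (K * ρ t x ^ γ))) <
        g * (∫ x in Ω, ρ t x) ^ 2 - ε) :
    T < ⊤ :=
  euler_poisson_2d_nonglobal_general le_rfl hγ hsol hε hineq
end
end

section
/- Let N ≥ 3 and let ρ : R^N → [0,∞) be a C¹ function with compact support, P = Kρ^γ with K > 0 and γ > 1, and Φ(x) = −g∫ ρ(y)/|x−y|^{N−2} dy with g > 0, satisfying the hydrostatic equilibrium equation ∇P(x) = −ρ(x)∇Φ(x) for all x. Then the virial identity N∫ P(x) dx = (g(N−2)/2) ∫∫ ρ(x)ρ(y)/|x−y|^{N−2} dy dx = −((N−2)/2) ∫ ρ(x)Φ(x) dx holds. -/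
open MeasureTheory Real Filter
open scoped RealInnerProductSpace Topology

noncomputable section

/-!
Testing `∇P = -ρ∇Φ` against `x` and integrating by parts gives `N ∫ P = ∫ ρ (x·∇Φ)`, so the point
is to compute the last integral for `Φ = ρ ⋆ k` with an even kernel `k` of degree `d`
(`d = 2 - N` for Newtonian gravity). Differentiating the effect of dilations at scale `1` gives
Euler's identity `∫ k (z·∇f) = -(d + N) ∫ k f`, which requires no differentiability of `k`. Applied
on the product space to the degree-`d` kernel `k (x - y)` and the function `ρ x * ρ y`, it gives
`2 ∫ (x·∇ρ) Φ = -(d + 2N) ∫ ρ Φ`, and a last integration by parts gives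
`∫ ρ (x·∇Φ) = (d / 2) ∫ ρ Φ`.
-/

open scoped Convolution
open ContinuousLinearMap (mul)

section EulerOperator

variable {E F : Type*} [NormedAddCommGroup E] [NormedSpace ℝ E]
  [NormedAddCommGroup F] [NormedSpace ℝ F]

/-- The Euler operator `f ↦ x·∇f`: the derivative of `f` at `x` in the radial direction `x`, not
normalised to a unit vector. -/
def eulerDeriv (f : E → F) (x : E) : F :=
  fderiv ℝ f x x

lemma continuous_eulerDeriv {f : E → F} (hf : ContDiff ℝ 1 f) : Continuous (eulerDeriv f) :=
  (hf.continuous_fderiv one_ne_zero).clm_apply continuous_id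

lemma hasCompactSupport_eulerDeriv {f : E → F} (hf : HasCompactSupport f) :
    HasCompactSupport (eulerDeriv f) :=
  (hf.fderiv ℝ).mono fun x hx hx' => hx (by simp [eulerDeriv, hx'])

lemma eulerDeriv_mul {f h : E → ℝ} {x : E} (hf : DifferentiableAt ℝ f x)
    (hh : DifferentiableAt ℝ h x) :
    eulerDeriv (fun x => f x * h x) x = eulerDeriv f x * h x + f x * eulerDeriv h x := by
  rw [eulerDeriv, fderiv_fun_mul hf hh]
  simp only [eulerDeriv, add_apply, smul_apply, smul_eq_mul]
  ring

lemma eulerDeriv_comp_continuousLinearMap {G : Type*} [NormedAddCommGroup G] [NormedSpace ℝ G]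
    {f : F → G} (L : E →L[ℝ] F) {x : E} (hf : DifferentiableAt ℝ f (L x)) :
    eulerDeriv (fun x => f (L x)) x = eulerDeriv f (L x) :=
  congrArg (· x) (hf.hasFDerivAt.comp x L.hasFDerivAt).fderiv

lemma eulerDeriv_mul_prod {f : E → ℝ} {h : F → ℝ} {p : E × F}
    (hf : DifferentiableAt ℝ f p.1) (hh : DifferentiableAt ℝ h p.2) :
    eulerDeriv (fun p : E × F => f p.1 * h p.2) p
      = eulerDeriv f p.1 * h p.2 + f p.1 * eulerDeriv h p.2 := by
  rw [eulerDeriv_mul (f := fun p : E × F => f p.1) (h := fun p : E × F => h p.2)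
    (hf.comp p differentiableAt_fst) (hh.comp p differentiableAt_snd)]
  congr 2
  · exact eulerDeriv_comp_continuousLinearMap (ContinuousLinearMap.fst ℝ E F) hf
  · exact eulerDeriv_comp_continuousLinearMap (ContinuousLinearMap.snd ℝ E F) hh

lemma hasDerivAt_comp_smul {f : E → F} {s : ℝ} {z : E} (hs : s ≠ 0)
    (hf : DifferentiableAt ℝ f (s • z)) :
    HasDerivAt (fun s : ℝ => f (s • z)) (s⁻¹ • eulerDeriv f (s • z)) s := by
  have hray : HasDerivAt (fun s : ℝ => s • z) z s := by
    simpa using (hasDerivAt_id s).smul_const z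
  have hchain := hf.hasFDerivAt.comp_hasDerivAt s hray
  have hscale : s⁻¹ • eulerDeriv f (s • z) = fderiv ℝ f (s • z) z := by simp [eulerDeriv, hs]
  rwa [hscale]

end EulerOperator

/-- `k` is positively homogeneous of degree `d`. Only positive dilations are tested, so that the
degree may be any real number. -/
def PosHomogeneous {E : Type*} [SMul ℝ E] (k : E → ℝ) (d : ℝ) : Prop :=
  ∀ ⦃s : ℝ⦄, 0 < s → ∀ z, k (s • z) = s ^ d * k z

section PosHomogeneous

variable {E : Type*}

lemma posHomogeneous_const [SMul ℝ E] (c : ℝ) : PosHomogeneous (fun _ : E => c) 0 :=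
  fun s _ _ => by simp

lemma posHomogeneous_inv_norm_rpow [NormedAddCommGroup E] [NormedSpace ℝ E] (α : ℝ) :
    PosHomogeneous (fun z : E => (‖z‖ ^ α)⁻¹) (-α) := fun s hs z => by
  simp only [norm_smul, Real.norm_of_nonneg hs.le, Real.mul_rpow hs.le (norm_nonneg z), mul_inv,
    Real.rpow_neg hs.le]

lemma PosHomogeneous.const_mul [SMul ℝ E] {k : E → ℝ} {d : ℝ} (hk : PosHomogeneous k d)
    (c : ℝ) : PosHomogeneous (fun z => c * k z) d := fun s hs z => by
  simp only [hk hs, mul_left_comm]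

lemma PosHomogeneous.comp_linearMap {V W : Type*} [AddCommMonoid V] [Module ℝ V]
    [AddCommMonoid W] [Module ℝ W] {k : W → ℝ} {d : ℝ} (hk : PosHomogeneous k d)
    (L : V →ₗ[ℝ] W) : PosHomogeneous (fun z => k (L z)) d := fun s hs z => by
  simp only [map_smul, hk hs]

end PosHomogeneous

lemma exists_norm_comp_smul_le_indicator {E F : Type*} [NormedAddCommGroup E]
    [NormedSpace ℝ E] [NormedAddCommGroup F] {g : E → F} (hg : Continuous g)
    (hgc : HasCompactSupport g) {a : ℝ} (ha : 0 < a) :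
    ∃ C R, ∀ s, a ≤ s → ∀ z,
      ‖g (s • z)‖ ≤ (Metric.closedBall (0 : E) R).indicator (fun _ => C) z := by
  obtain ⟨C, hC⟩ := hg.bounded_above_of_compact_support hgc
  obtain ⟨R, -, hR⟩ := hgc.isCompact.isBounded.exists_pos_norm_lt
  have hC_nonneg : 0 ≤ C := (norm_nonneg _).trans (hC 0)
  refine ⟨C, R / a, fun s hs z => ?_⟩
  by_cases hz : g (s • z) = 0
  · rw [hz, norm_zero]
    exact Set.indicator_nonneg (fun _ _ => hC_nonneg) z
  · have hsz : ‖s • z‖ < R := hR _ (subset_tsupport _ hz)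
    rw [norm_smul, Real.norm_of_nonneg (ha.le.trans hs)] at hsz
    have hzR : ‖z‖ ≤ R / a := by
      rw [le_div_iff₀' ha]
      exact (mul_le_mul_of_nonneg_right hs (norm_nonneg z)).trans hsz.le
    rw [Set.indicator_of_mem (mem_closedBall_zero_iff.2 hzR)]
    exact hC _

lemma hasDerivAt_integral_smul_comp_smul {E F : Type*} [NormedAddCommGroup E] [NormedSpace ℝ E]
    [ProperSpace E] [MeasurableSpace E] [BorelSpace E] {μ : Measure E} [NormedAddCommGroup F]
    [NormedSpace ℝ F] {k : E → ℝ} (hk : LocallyIntegrable k μ) {f : E → F} (hf : ContDiff ℝ 1 f)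
    (hfc : HasCompactSupport f) :
    HasDerivAt (fun s : ℝ => ∫ z, k z • f (s • z) ∂μ) (∫ z, k z • eulerDeriv f z ∂μ) 1 := by
  have hDf := continuous_eulerDeriv hf
  obtain ⟨C, R, hCR⟩ := exists_norm_comp_smul_le_indicator hDf
    (hasCompactSupport_eulerDeriv hfc) (one_half_pos (α := ℝ))
  have hC_int : Integrable
      (fun z => 2 * (‖k z‖ * (Metric.closedBall (0 : E) R).indicator (fun _ => C) z)) μ := by
    refine Integrable.const_mul ?_ 2
    simp_rw [← Set.indicator_mul_right (Metric.closedBall (0 : E) R) (fun z => ‖k z‖)]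
    exact (integrable_indicator_iff Metric.isClosed_closedBall.measurableSet).2
      ((hk.integrableOn_isCompact (isCompact_closedBall 0 R)).norm.mul_const C)
  have hkm := hk.aestronglyMeasurable
  have hderiv := (hasDerivAt_integral_of_dominated_loc_of_deriv_le
    (F := fun (s : ℝ) z => k z • f (s • z))
    (F' := fun (s : ℝ) z => k z • s⁻¹ • eulerDeriv f (s • z))
    (Ici_mem_nhds one_half_lt_one)
    (.of_forall fun s =>
      hkm.smul (hf.continuous.comp (continuous_const_smul s)).aestronglyMeasurable)
    (by simpa using hk.integrable_smul_right_of_hasCompactSupport hf.continuous hfc)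
    (by simpa using! hkm.smul hDf.aestronglyMeasurable)
    (.of_forall fun z s hs => ?_) hC_int
    (.of_forall fun z s hs =>
      (hasDerivAt_comp_smul (one_half_pos.trans_le hs).ne'
        (hf.differentiable one_ne_zero _)).const_smul (k z))).2
  · simpa using hderiv
  · have hs_pos : 0 < s := one_half_pos.trans_le hs
    have hs_inv : s⁻¹ ≤ 2 := by simpa using inv_anti₀ one_half_pos (Set.mem_Ici.1 hs)
    rw [norm_smul, norm_smul, norm_inv, Real.norm_of_nonneg hs_pos.le, mul_left_comm]
    gcongr
    exact hCR s hs z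

section EulerIdentity

variable {E F : Type*} [NormedAddCommGroup E] [NormedSpace ℝ E] [FiniteDimensional ℝ E]
  [MeasurableSpace E] [BorelSpace E] {μ : Measure E} [μ.IsAddHaarMeasure]
  [NormedAddCommGroup F] [NormedSpace ℝ F] {k : E → ℝ} {d : ℝ}

lemma PosHomogeneous.integral_smul_comp_smul (hk : PosHomogeneous k d) (f : E → F) {s : ℝ}
    (hs : 0 < s) :
    ∫ z, k z • f (s • z) ∂μ = s ^ (-(d + Module.finrank ℝ E)) • ∫ z, k z • f z ∂μ := by
  have hks : ∀ z, k z • f (s • z) = s ^ (-d) • (k (s • z) • f (s • z)) := fun z => by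
    rw [hk hs, smul_smul, ← mul_assoc, ← Real.rpow_add hs, neg_add_cancel, Real.rpow_zero, one_mul]
  simp_rw [hks]
  rw [integral_smul, Measure.integral_comp_smul_of_nonneg μ (fun z => k z • f z) s (hR := hs.le),
    smul_smul, neg_add, Real.rpow_add hs, Real.rpow_neg hs.le (Module.finrank ℝ E : ℝ),
    Real.rpow_natCast]

lemma PosHomogeneous.integral_smul_eulerDeriv (hk : PosHomogeneous k d)
    (hk_int : LocallyIntegrable k μ) {f : E → F} (hf : ContDiff ℝ 1 f)
    (hfc : HasCompactSupport f) :
    ∫ z, k z • eulerDeriv f z ∂μ = -(d + Module.finrank ℝ E) • ∫ z, k z • f z ∂μ := by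
  have hpow : HasDerivAt
      (fun s : ℝ => s ^ (-(d + Module.finrank ℝ E)) • ∫ z, k z • f z ∂μ)
      (-(d + Module.finrank ℝ E) • ∫ z, k z • f z ∂μ) 1 := by
    simpa using (Real.hasDerivAt_rpow_const (p := -(d + Module.finrank ℝ E))
      (Or.inl one_ne_zero)).smul_const (∫ z, k z • f z ∂μ)
  refine (hasDerivAt_integral_smul_comp_smul hk_int hf hfc).unique
    (hpow.congr_of_eventuallyEq ?_)
  filter_upwards [lt_mem_nhds one_pos] with s hs
  exact hk.integral_smul_comp_smul f hs

lemma integral_eulerDeriv {f : E → F} (hf : ContDiff ℝ 1 f) (hfc : HasCompactSupport f) :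
    ∫ x, eulerDeriv f x ∂μ = -(Module.finrank ℝ E : ℝ) • ∫ x, f x ∂μ := by
  simpa using (posHomogeneous_const (1 : ℝ)).integral_smul_eulerDeriv (μ := μ)
    (locallyIntegrable_const 1) hf hfc

lemma integral_mul_eulerDeriv {f h : E → ℝ} (hf : ContDiff ℝ 1 f) (hfc : HasCompactSupport f)
    (hh : ContDiff ℝ 1 h) :
    ∫ x, f x * eulerDeriv h x ∂μ
      = -∫ x, eulerDeriv f x * h x ∂μ - Module.finrank ℝ E * ∫ x, f x * h x ∂μ := by
  have hDf_mul : Integrable (fun x => eulerDeriv f x * h x) μ :=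
    ((continuous_eulerDeriv hf).mul hh.continuous).integrable_of_hasCompactSupport
      (hasCompactSupport_eulerDeriv hfc).mul_right
  have hmul_Dh : Integrable (fun x => f x * eulerDeriv h x) μ :=
    (hf.continuous.mul (continuous_eulerDeriv hh)).integrable_of_hasCompactSupport hfc.mul_right
  have hdiv := integral_eulerDeriv (μ := μ) (hf.mul hh) hfc.mul_right
  simp only [eulerDeriv_mul (hf.differentiable one_ne_zero _) (hh.differentiable one_ne_zero _),
    smul_eq_mul] at hdiv
  rw [integral_add hDf_mul hmul_Dh] at hdiv
  linarith

end EulerIdentity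

lemma hasCompactSupport_mul_prod {X Y : Type*} [TopologicalSpace X] [R1Space X]
    [TopologicalSpace Y] [R1Space Y] {f : X → ℝ} {h : Y → ℝ} (hf : HasCompactSupport f)
    (hh : HasCompactSupport h) : HasCompactSupport fun p : X × Y => f p.1 * h p.2 := by
  refine .of_support_subset_isCompact (hf.isCompact.prod hh.isCompact) fun p hp => ?_
  exact ⟨subset_tsupport _ (left_ne_zero_of_mul hp), subset_tsupport _ (right_ne_zero_of_mul hp)⟩

lemma locallyIntegrable_comp_sub {E F : Type*} [NormedAddCommGroup E] [ProperSpace E]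
    [MeasurableSpace E] [BorelSpace E] {μ : Measure E} [SFinite μ] [IsFiniteMeasureOnCompacts μ]
    [μ.IsAddRightInvariant] [NormedAddCommGroup F] {k : E → F} (hk : LocallyIntegrable k μ) :
    LocallyIntegrable (fun p : E × E => k (p.1 - p.2)) (μ.prod μ) := by
  intro p
  set U := Metric.closedBall (p.1 - p.2) 1
  set V := Metric.closedBall p.2 1
  have hV : IsFiniteMeasure (μ.restrict V) :=
    isFiniteMeasure_restrict.2 (isCompact_closedBall _ _).measure_ne_top
  have hUV : IntegrableOn (fun q : E × E => k q.1) (U ×ˢ V) (μ.prod μ) := by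
    rw [IntegrableOn, ← Measure.prod_restrict]
    exact Integrable.comp_fst (hk.integrableOn_isCompact (isCompact_closedBall _ _)) _
  have hshear : Continuous fun q : E × E => (q.1 - q.2, q.2) := by fun_prop
  refine ⟨_, hshear.continuousAt.preimage_mem_nhds
    (prod_mem_nhds (Metric.closedBall_mem_nhds _ one_pos) (Metric.closedBall_mem_nhds _ one_pos)),
    ?_⟩
  exact ((measurePreserving_sub_prod μ μ).restrict_preimage
    (Metric.isClosed_closedBall.prod Metric.isClosed_closedBall).measurableSet
    ).integrable_comp_of_integrable hUV

section Convolution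

variable {E : Type*} [NormedAddCommGroup E] [NormedSpace ℝ E] [FiniteDimensional ℝ E]
  [MeasurableSpace E] [BorelSpace E] {μ : Measure E} [μ.IsAddHaarMeasure]
  {k f h ρ : E → ℝ} {d : ℝ}

lemma integrable_mul_prod_comp_sub (hk : LocallyIntegrable k μ) (hf : Continuous f)
    (hfc : HasCompactSupport f) (hh : Continuous h) (hhc : HasCompactSupport h) :
    Integrable (fun p : E × E => k (p.1 - p.2) * (f p.1 * h p.2)) (μ.prod μ) :=
  (locallyIntegrable_comp_sub hk).integrable_smul_right_of_hasCompactSupport (by fun_prop)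
    (hasCompactSupport_mul_prod hfc hhc)

lemma integral_mul_prod_comp_sub (hk : LocallyIntegrable k μ) (hf : Continuous f)
    (hfc : HasCompactSupport f) (hh : Continuous h) (hhc : HasCompactSupport h) :
    ∫ p : E × E, k (p.1 - p.2) * (f p.1 * h p.2) ∂μ.prod μ
      = ∫ x, f x * (h ⋆[mul ℝ ℝ, μ] k) x ∂μ := by
  rw [integral_prod _ (integrable_mul_prod_comp_sub hk hf hfc hh hhc)]
  refine integral_congr_ae (.of_forall fun x => ?_)
  simp only [convolution_def, ContinuousLinearMap.mul_apply', ← integral_const_mul]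
  refine integral_congr_ae (.of_forall fun y => ?_)
  ring

lemma integral_mul_convolution_comm (hk : LocallyIntegrable k μ) (hk_even : Function.Even k)
    (hf : Continuous f) (hfc : HasCompactSupport f) (hh : Continuous h)
    (hhc : HasCompactSupport h) :
    ∫ x, f x * (h ⋆[mul ℝ ℝ, μ] k) x ∂μ = ∫ x, h x * (f ⋆[mul ℝ ℝ, μ] k) x ∂μ := by
  rw [← integral_mul_prod_comp_sub hk hf hfc hh hhc, ← integral_mul_prod_comp_sub hk hh hhc hf hfc,
    ← integral_prod_swap]
  refine integral_congr_ae (.of_forall fun p => ?_)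
  simp only [Prod.fst_swap, Prod.snd_swap]
  rw [← hk_even, neg_sub, mul_comm (f p.2)]

lemma PosHomogeneous.integral_eulerDeriv_mul_convolution_add (hk : PosHomogeneous k d)
    (hk_int : LocallyIntegrable k μ) (hf : ContDiff ℝ 1 f) (hfc : HasCompactSupport f)
    (hh : ContDiff ℝ 1 h) (hhc : HasCompactSupport h) :
    ∫ x, eulerDeriv f x * (h ⋆[mul ℝ ℝ, μ] k) x ∂μ
        + ∫ x, f x * (eulerDeriv h ⋆[mul ℝ ℝ, μ] k) x ∂μ
      = -(d + 2 * Module.finrank ℝ E) * ∫ x, f x * (h ⋆[mul ℝ ℝ, μ] k) x ∂μ := by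
  have hDf := continuous_eulerDeriv hf
  have hDfc := hasCompactSupport_eulerDeriv hfc
  have hDh := continuous_eulerDeriv hh
  have hDhc := hasCompactSupport_eulerDeriv hhc
  have hk_sub : PosHomogeneous (fun p : E × E => k (p.1 - p.2)) d :=
    hk.comp_linearMap (LinearMap.fst ℝ E E - LinearMap.snd ℝ E E)
  have heuler := hk_sub.integral_smul_eulerDeriv (locallyIntegrable_comp_sub hk_int)
    ((hf.comp contDiff_fst).mul (hh.comp contDiff_snd)) (hasCompactSupport_mul_prod hfc hhc)
  simp only [Function.comp_apply, smul_eq_mul,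
    eulerDeriv_mul_prod (hf.differentiable one_ne_zero _) (hh.differentiable one_ne_zero _),
    mul_add, Module.finrank_prod, ← two_mul, Nat.cast_mul, Nat.cast_ofNat] at heuler
  rw [← integral_mul_prod_comp_sub hk_int hDf hDfc hh.continuous hhc,
    ← integral_mul_prod_comp_sub hk_int hf.continuous hfc hDh hDhc,
    ← integral_mul_prod_comp_sub hk_int hf.continuous hfc hh.continuous hhc, ← integral_add
      (integrable_mul_prod_comp_sub hk_int hDf hDfc hh.continuous hhc)
      (integrable_mul_prod_comp_sub hk_int hf.continuous hfc hDh hDhc), heuler]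

lemma PosHomogeneous.two_mul_integral_eulerDeriv_mul_convolution_self (hk : PosHomogeneous k d)
    (hk_int : LocallyIntegrable k μ) (hk_even : Function.Even k) (hρ : ContDiff ℝ 1 ρ)
    (hρc : HasCompactSupport ρ) :
    2 * ∫ x, eulerDeriv ρ x * (ρ ⋆[mul ℝ ℝ, μ] k) x ∂μ
      = -(d + 2 * Module.finrank ℝ E) * ∫ x, ρ x * (ρ ⋆[mul ℝ ℝ, μ] k) x ∂μ := by
  rw [← hk.integral_eulerDeriv_mul_convolution_add hk_int hρ hρc hρ hρc, two_mul]
  congr 1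
  exact integral_mul_convolution_comm hk_int hk_even (continuous_eulerDeriv hρ)
    (hasCompactSupport_eulerDeriv hρc) hρ.continuous hρc

lemma PosHomogeneous.integral_mul_eulerDeriv_convolution_self (hk : PosHomogeneous k d)
    (hk_int : LocallyIntegrable k μ) (hk_even : Function.Even k) (hρ : ContDiff ℝ 1 ρ)
    (hρc : HasCompactSupport ρ) :
    ∫ x, ρ x * eulerDeriv (ρ ⋆[mul ℝ ℝ, μ] k) x ∂μ
      = d / 2 * ∫ x, ρ x * (ρ ⋆[mul ℝ ℝ, μ] k) x ∂μ := by
  have hΦ : ContDiff ℝ 1 (ρ ⋆[mul ℝ ℝ, μ] k) :=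
    hρc.contDiff_convolution_left (n := 1) (mul ℝ ℝ) hρ hk_int
  linarith [integral_mul_eulerDeriv (μ := μ) hρ hρc hΦ,
    hk.two_mul_integral_eulerDeriv_mul_convolution_self hk_int hk_even hρ hρc]

lemma PosHomogeneous.finrank_mul_integral_pressure_eq (hk : PosHomogeneous k d)
    (hk_int : LocallyIntegrable k μ) (hk_even : Function.Even k) (hρ : ContDiff ℝ 1 ρ)
    (hρc : HasCompactSupport ρ) {P : E → ℝ} (hP : ContDiff ℝ 1 P) (hPc : HasCompactSupport P)
    (hbalance : ∀ x, eulerDeriv P x = -(ρ x * eulerDeriv (ρ ⋆[mul ℝ ℝ, μ] k) x)) :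
    Module.finrank ℝ E * ∫ x, P x ∂μ = d / 2 * ∫ x, ρ x * (ρ ⋆[mul ℝ ℝ, μ] k) x ∂μ := by
  have hdiv := integral_eulerDeriv (μ := μ) hP hPc
  simp_rw [hbalance, integral_neg, smul_eq_mul, neg_mul] at hdiv
  rw [← neg_injective hdiv, hk.integral_mul_eulerDeriv_convolution_self hk_int hk_even hρ hρc]

lemma locallyIntegrable_inv_norm_rpow [Nontrivial E] {α : ℝ} (hα : α < Module.finrank ℝ E) :
    LocallyIntegrable (fun z : E => (‖z‖ ^ α)⁻¹) μ := by
  refine locallyIntegrable_of_norm_le_rpow (C := 1) Module.finrank_pos hα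
    (.of_forall fun z => ?_) (by fun_prop : Measurable _).aestronglyMeasurable
  rw [Real.norm_of_nonneg (by positivity), Real.rpow_neg (norm_nonneg z), one_mul]

end Convolution

lemma eulerDeriv_eq_of_gradient_eq_smul {E : Type*} [NormedAddCommGroup E]
    [InnerProductSpace ℝ E] [CompleteSpace E] {P Φ : E → ℝ} {c : ℝ} {x : E}
    (h : gradient P x = c • gradient Φ x) : eulerDeriv P x = c * eulerDeriv Φ x := by
  rw [eulerDeriv, ← inner_gradient_left, h, inner_smul_left, inner_gradient_left]
  rfl

theorem virial_identity_general {E : Type*} [NormedAddCommGroup E] [InnerProductSpace ℝ E]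
    [FiniteDimensional ℝ E] [Nontrivial E] [MeasurableSpace E] [BorelSpace E]
    {α g : ℝ} (hα : α < Module.finrank ℝ E) {ρ P Φ : E → ℝ}
    (hρ : ContDiff ℝ 1 ρ) (hρc : HasCompactSupport ρ)
    (hP : ContDiff ℝ 1 P) (hPc : HasCompactSupport P)
    (hΦ : ∀ x, Φ x = -(g * ∫ y, ρ y / ‖x - y‖ ^ α))
    (hhyd : ∀ x, gradient P x = -(ρ x) • gradient Φ x) :
    Module.finrank ℝ E * ∫ x, P x
        = (g * α / 2) * ∫ x, ρ x * ∫ y, ρ y / ‖x - y‖ ^ α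
      ∧ Module.finrank ℝ E * ∫ x, P x = -(α / 2) * ∫ x, ρ x * Φ x := by
  have hΦ_conv : Φ = ρ ⋆[mul ℝ ℝ, volume] fun z => -g * (‖z‖ ^ α)⁻¹ := by
    ext x
    simp_rw [hΦ, ← neg_mul, convolution_def, ContinuousLinearMap.mul_apply', mul_left_comm _ (-g),
      integral_const_mul, div_eq_mul_inv]
  have hvirial : Module.finrank ℝ E * ∫ x, P x = -(α / 2) * ∫ x, ρ x * Φ x := by
    rw [hΦ_conv, ← neg_div]
    refine ((posHomogeneous_inv_norm_rpow α).const_mul (-g)).finrank_mul_integral_pressure_eq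
      ((locallyIntegrable_inv_norm_rpow hα).smul (-g)) (fun z => by simp only [norm_neg])
      hρ hρc hP hPc fun x => ?_
    rw [← hΦ_conv, eulerDeriv_eq_of_gradient_eq_smul (hhyd x), neg_mul]
  refine ⟨?_, hvirial⟩
  simp_rw [hvirial, hΦ, mul_neg, mul_left_comm _ g, integral_neg, integral_const_mul]
  ring

lemma contDiff_const_mul_rpow {E : Type*} [NormedAddCommGroup E] [NormedSpace ℝ E] {ρ : E → ℝ}
    (hρ : ContDiff ℝ 1 ρ) (K : ℝ) {γ : ℝ} (hγ : 1 ≤ γ) : ContDiff ℝ 1 fun x => K * ρ x ^ γ :=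
  contDiff_const.mul (hρ.rpow_const_of_le (m := 1) (by simpa using hγ))

lemma hasCompactSupport_const_mul_rpow {X : Type*} [TopologicalSpace X] {ρ : X → ℝ}
    (hρ : HasCompactSupport ρ) (K : ℝ) {γ : ℝ} (hγ : γ ≠ 0) :
    HasCompactSupport fun x => K * ρ x ^ γ :=
  hρ.comp_left (g := fun r => K * r ^ γ) (by simp [Real.zero_rpow hγ])

/-- For an `N ≥ 3` dimensional hydrostatic equilibrium
`∇P = -ρ∇Φ` with `P = Kρ^γ` and `Φ(x) = -g∫ ρ(y)/|x-y|^(N-2) dy`, the virial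
identity `N∫P = (g(N-2)/2)∫∫ ρ(x)ρ(y)/|x-y|^(N-2) = -((N-2)/2)∫ρΦ` holds. -/
theorem virial_identity (N : ℕ) (hN : 3 ≤ N) (K γ g : ℝ)
    (hK : 0 < K) (hγ : 1 < γ) (hg : 0 < g)
    (ρ : Euc N → ℝ) (hρ : ContDiff ℝ 1 ρ) (hsupp : HasCompactSupport ρ)
    (hnn : ∀ x, 0 ≤ ρ x)
    (Φ : Euc N → ℝ)
    (hΦ : ∀ x, Φ x = -(g * ∫ y, ρ y / ‖x - y‖ ^ ((N : ℝ) - 2)))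
    (hhyd : ∀ x, gradient (fun z => K * ρ z ^ γ) x = -(ρ x) • gradient Φ x) :
    (N : ℝ) * ∫ x, K * ρ x ^ γ
        = (g * ((N : ℝ) - 2) / 2) * ∫ x, ρ x * ∫ y, ρ y / ‖x - y‖ ^ ((N : ℝ) - 2)
      ∧ (N : ℝ) * ∫ x, K * ρ x ^ γ
        = -(((N : ℝ) - 2) / 2) * ∫ x, ρ x * Φ x := by
  have : Nontrivial (Euc N) := Module.nontrivial_of_finrank_pos (R := ℝ)
    (by rw [finrank_euclideanSpace_fin]; omega)
  simpa using virial_identity_general (by simp) hρ hsupp (contDiff_const_mul_rpow hρ K hγ.le)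
    (hasCompactSupport_const_mul_rpow hsupp K (zero_lt_one.trans hγ).ne') hΦ hhyd
end
end
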